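/- Let f ∈ 𝒪(ℂ²,0,0) and let 𝔐_f = {m ∈ ℕ : the linear part of f at 0 (the linear map x ↦ Df(0)x) has a periodic point of exact period m}. Then: (i) for each m ∈ ℕ \ 𝔐_f such that 0 is an isolated fixed point of f^m, P_m(f,0) = 0; (ii) for each positive integer M such that 0 is an isolated fixed point of f^M, μ_{f^M}(0) = Σ_{m ∈ 𝔐_f, m|M} P_m(f,0). -/

import Mathlib

open Metric Set Filter Topology Polynomial Asymptotics
open scoped Classical

noncomputable section

namespace ZhangPaper

/-- `ℂⁿ`. -/
abbrev Cn (n : ℕ) := Fin n → ℂ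

variable {n : ℕ}

/-- A germ in `𝒪(ℂⁿ,0,0)`: holomorphic near `0` and fixing the origin. -/
def IsGerm (f : Cn n → Cn n) : Prop := AnalyticAt ℂ f 0 ∧ f 0 = 0

/-- `q` is a regular value of `h` on `s`. -/
def IsRegularValueOn (h : Cn n → Cn n) (s : Set (Cn n)) (q : Cn n) : Prop :=
  ∀ x ∈ s, h x = q → Function.Bijective (fderiv ℂ h x)

/-- `m` is the zero order (multiplicity) of `h` at the isolated zero `p`:
the number of solutions of `h x = q` near `p`, for any regular value `q`
with `‖q‖` sufficiently small. -/
def HasZeroOrder (h : Cn n → Cn n) (p : Cn n) (m : ℕ) : Prop :=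
  ∃ r > 0, AnalyticOnNhd ℂ h (closedBall p r) ∧ h p = 0 ∧
    (∀ x ∈ closedBall p r, h x = 0 → x = p) ∧
    (∀ ε > 0, ∃ q : Cn n, ‖q‖ < ε ∧ IsRegularValueOn h (ball p r) q) ∧
    ∃ δ > 0, ∀ q : Cn n, ‖q‖ < δ → IsRegularValueOn h (ball p r) q →
      {x ∈ ball p r | h x = q}.ncard = m

/-- The zero order `π_h(p)` of `h` at `p`. -/
def zeroOrder (h : Cn n → Cn n) (p : Cn n) : ℕ := sInf {m | HasZeroOrder h p m}

/-- The fixed point index `μ_g(p)` of `g` at `p`. -/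
def fixedPointIndex (g : Cn n → Cn n) (p : Cn n) : ℕ :=
  zeroOrder (fun x => x - g x) p

/-- The local Dold index `P_M(f,0)`. -/
def doldIndex (f : Cn n → Cn n) (M : ℕ) : ℤ :=
  ∑ τ ∈ M.primeFactors.powerset,
    (-1 : ℤ) ^ τ.card * (fixedPointIndex (f^[M / (∏ p ∈ τ, p)]) 0 : ℤ)

/-- `x` is a periodic point of exact period `M` for `g`. -/
def ExactPeriodicPt (g : Cn n → Cn n) (M : ℕ) (x : Cn n) : Prop :=
  g^[M] x = x ∧ ∀ j, 0 < j → j < M → g^[j] x ≠ x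

/-- `g` has at least `m` distinct periodic orbits of period `M` inside `B`. -/
def AtLeastOrbits (g : Cn n → Cn n) (M m : ℕ) (B : Set (Cn n)) : Prop :=
  ∃ p : Fin m → Cn n,
    (∀ i, ExactPeriodicPt g M (p i) ∧ ∀ j < M, g^[j] (p i) ∈ B) ∧
    ∀ i j : Fin m, i ≠ j → ∀ l < M, g^[l] (p i) ≠ p j

/-- `g` has exactly `m` distinct periodic orbits of period `M` inside `B`. -/
def ExactlyOrbits (g : Cn n → Cn n) (M m : ℕ) (B : Set (Cn n)) : Prop :=
  AtLeastOrbits g M m B ∧ ¬ AtLeastOrbits g M (m + 1) B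

/-- The number `𝒪_M(f,0)` of periodic orbits of period `M` of `f` hidden at the
fixed point `0`: the largest `m` such that there is a ball `B` centered at `0` in which
`0` is the only fixed point of `f^M`, and a sequence of holomorphic maps fixing `0`
converging to `f` uniformly on `B`, each having `m` distinct periodic orbits of
period `M` in `B`. -/
def hiddenOrbits (f : Cn n → Cn n) (M : ℕ) : ℕ :=
  sSup {m | ∃ r > 0,
    (∀ x ∈ closedBall (0 : Cn n) r, f^[M] x = x → x = 0) ∧
    ∃ fk : ℕ → Cn n → Cn n,
      (∀ k, AnalyticOnNhd ℂ (fk k) (ball (0 : Cn n) r) ∧ fk k 0 = 0) ∧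
      TendstoUniformlyOn fk f atTop (ball (0 : Cn n) r) ∧
      ∀ k, AtLeastOrbits (fk k) M m (ball (0 : Cn n) r)}

/-- `0` is an isolated fixed point of `g`. -/
def IsolatedFixedPtAt0 (g : Cn n → Cn n) : Prop :=
  g 0 = 0 ∧ ∀ᶠ x in 𝓝[≠] (0 : Cn n), g x ≠ x

/-- `0` is an isolated zero of `h`. -/
def IsolatedZeroAt0 (h : Cn n → Cn n) : Prop :=
  h 0 = 0 ∧ ∀ᶠ x in 𝓝[≠] (0 : Cn n), h x ≠ 0

/-- `p` is a simple fixed point of `g`: `Dg(p)` has no eigenvalue `1`. -/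
def SimpleFixedPt (g : Cn n → Cn n) (p : Cn n) : Prop :=
  g p = p ∧ ¬ Module.End.HasEigenvalue ((fderiv ℂ g p).toLinearMap) 1

/-- The global fixed point index `L(g)` of `g` over `U`: the sum of the fixed point
indices at all fixed points of `g` in `U`. -/
def globalIndex (g : Cn n → Cn n) (U : Set (Cn n)) : ℤ :=
  ∑ᶠ p ∈ {x ∈ U | g x = x}, (fixedPointIndex g p : ℤ)

/-- The global Dold index `P_M(f)` over `U`. -/
def globalDold (f : Cn n → Cn n) (M : ℕ) (U : Set (Cn n)) : ℤ :=
  ∑ τ ∈ M.primeFactors.powerset,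
    (-1 : ℤ) ^ τ.card * globalIndex (f^[M / (∏ p ∈ τ, p)]) U

/-!
For twice continuously differentiable real maps, integrating a bump function of the values times
the Jacobian gives a degree: by Piola's identity its variation along a homotopy is the integral of
the divergence of a compactly supported field. Holomorphic maps have nonnegative real Jacobian, so
the degree counts zeros, and the zero order is unchanged by an `o(h)` perturbation of `h` and by a
linear automorphism of the target.

If `A` is the linear part of `g` at a fixed point, then
`id - g ^ p = (1 + A + ⋯ + A ^ (p - 1)) (id - g) + o(id - g)`, and the sum is invertible as soon as
every fixed vector of `A ^ p` is fixed by `A`; in that case `g ^ p` and `g` have the same index.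

Suppose that no vector has exact period `m` under the linear part of `f`. Every vector of period `m`
then has period `m / p` for some prime `p ∣ m`, and since a vector space is not a finite union of
proper subspaces a single `p` works for all of them. For this `p` the terms of the Dold index
indexed by `τ` and `τ ∪ {p}` cancel. Part (ii) follows by Möbius inversion.
-/

section DeterminantIdentities

variable {R M N ι : Type*} [CommRing R] [AddCommGroup M] [Module R M] [AddCommGroup N] [Module R N]
  [Fintype ι] [DecidableEq ι]

theorem sum_det_update_smul (b : Module.Basis ι R M) (v : ι → M) (w : M) :
    ∑ i, b.det (Function.update v i w) • v i = b.det v • w := by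
  have hcramer : ∀ i, b.det (Function.update v i w) = (b.toMatrix v).cramer (b.repr w) i :=
    fun i => by rw [Matrix.cramer_apply, Module.Basis.det_apply, Module.Basis.toMatrix_update]
  refine b.ext_elem fun j => ?_
  have hj := congrFun (Matrix.mulVec_cramer (b.toMatrix v) (b.repr w)) j
  simpa [hcramer, Matrix.mulVec, dotProduct, Module.Basis.toMatrix_apply,
    Module.Basis.det_apply, mul_comm] using hj

theorem sum_map_update_update_of_symm_eq_zero (Ω : M [⋀^ι]→ₗ[R] N) (v : ι → M) (w : M)
    (S : ι → ι → M) (hS : ∀ i j, S i j = S j i) :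
    ∑ i, ∑ j ∈ Finset.univ.erase i, Ω (Function.update (Function.update v i w) j (S i j)) = 0 := by
  have hswap : ∀ i j, i ≠ j → Ω (Function.update (Function.update v j w) i (S j i)) =
      -Ω (Function.update (Function.update v i w) j (S i j)) := fun i j hij => by
    rw [← Ω.map_swap _ hij, hS j i]
    congr 1
    ext k
    simp only [Function.comp_apply, Equiv.swap_apply_def, Function.update_apply]
    split_ifs <;> simp_all
  rw [Finset.sum_sigma']
  refine Finset.sum_involution (fun p _ => ⟨p.2, p.1⟩) (fun p hp => ?_) (fun p hp _ h => ?_)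
    (fun p hp => by simpa [eq_comm] using hp) fun _ _ => rfl
  · have hne : p.2 ≠ p.1 := by simpa using hp
    rw [hswap _ _ hne.symm, add_neg_cancel]
  · have hne : p.2 ≠ p.1 := by simpa using hp
    exact hne (congrArg Sigma.fst h)

end DeterminantIdentities

section Piola

variable {E ι : Type*} [NormedAddCommGroup E] [NormedSpace ℝ E] [Fintype ι] [DecidableEq ι]
  (b : Module.Basis ι ℝ E)

/-- The determinant in the basis `b` as a continuous multilinear map, so that it can be
differentiated. -/
def detMultilinear : ContinuousMultilinearMap ℝ (fun _ : ι => E) ℝ where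
  toMultilinearMap := b.det.toMultilinearMap
  cont := by
    have := b.finiteDimensional_of_finite
    refine Continuous.congr (f := fun v : ι → E => (Matrix.of fun i j => b.coord i (v j)).det)
      (Continuous.matrix_det ?_) fun v => (b.det_apply v).symm
    exact continuous_matrix fun i j =>
      (b.coord i).continuous_of_finiteDimensional.comp (continuous_apply j)

@[simp]
theorem detMultilinear_apply (v : ι → E) : detMultilinear b v = b.det v := rfl

/-- The `i`-th component of the vector field `φ(u) · adj(Du) w` in the basis `b`, written by
Cramer's rule as a determinant. -/
def flux (φ : E → ℝ) (u w : E → E) (i : ι) (x : E) : ℝ :=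
  φ (u x) * b.det (Function.update (fun k => fderiv ℝ u x (b k)) i (w x))

theorem hasFDerivAt_det_apply {G : Type*} [NormedAddCommGroup G] [NormedSpace ℝ G]
    {v : ι → G → E} {v' : ι → G →L[ℝ] E} {x : G} (hv : ∀ i, HasFDerivAt (v i) (v' i) x) :
    HasFDerivAt (fun y => b.det fun i => v i y)
      (∑ i, (detMultilinear b).toContinuousLinearMap (fun j => v j x) i ∘L v' i) x :=
  HasFDerivAt.multilinear_comp (f := detMultilinear b) hv

theorem continuousLinearMap_det_eq_basis_det (A : E →L[ℝ] E) : A.det = b.det fun i => A (b i) := by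
  simpa [Function.comp_def, ContinuousLinearMap.det, b.det_self] using
    (b.det_comp (A : E →ₗ[ℝ] E) b).symm

theorem hasDerivAt_det_add_smul (A B : E →L[ℝ] E) (t : ℝ) :
    HasDerivAt (fun s : ℝ => (A + s • B).det)
      (∑ i, b.det (Function.update (fun k => (A + t • B) (b k)) i (B (b i)))) t := by
  have hline : ∀ i, HasFDerivAt (fun s : ℝ => (A + s • B) (b i))
      ((ContinuousLinearMap.id ℝ ℝ).smulRight (B (b i))) t := fun i => by
    simpa using ((hasFDerivAt_id t).smul_const (B (b i))).const_add (A (b i))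
  simp only [continuousLinearMap_det_eq_basis_det b]
  convert (hasFDerivAt_det_apply b hline).hasDerivAt using 1
  simp

theorem hasFDerivAt_det_update {u w : E → E} {x : E} (hu : ContDiffAt ℝ 2 u x)
    (hw : DifferentiableAt ℝ w x) (i : ι) :
    HasFDerivAt (fun y => b.det (Function.update (fun k => fderiv ℝ u y (b k)) i (w y)))
      (∑ j, (detMultilinear b).toContinuousLinearMap
        (Function.update (fun k => fderiv ℝ u x (b k)) i (w x)) j ∘L
        Function.update (fun k => (fderiv ℝ (fderiv ℝ u) x).flip (b k)) i (fderiv ℝ w x) j) x := by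
  have hDu : HasFDerivAt (fderiv ℝ u) (fderiv ℝ (fderiv ℝ u) x) x :=
    ((hu.fderiv_right (m := 1) le_rfl).differentiableAt one_ne_zero).hasFDerivAt
  refine hasFDerivAt_det_apply b (v := fun j y =>
    Function.update (fun k => fderiv ℝ u y (b k)) i (w y) j) fun j => ?_
  rcases eq_or_ne j i with rfl | hji
  · simpa using hw.hasFDerivAt
  · simpa [Function.update_of_ne hji] using hDu.clm_apply (hasFDerivAt_const (b j) x)

theorem sum_fderiv_det_update {u w : E → E} {x : E} (hu : ContDiffAt ℝ 2 u x)
    (hw : DifferentiableAt ℝ w x) :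
    ∑ i, fderiv ℝ (fun y => b.det (Function.update (fun k => fderiv ℝ u y (b k)) i (w y))) x (b i) =
      ∑ i, b.det (Function.update (fun k => fderiv ℝ u x (b k)) i (fderiv ℝ w x (b i))) := by
  have hsymm : ∀ i j, fderiv ℝ (fderiv ℝ u) x (b i) (b j) = fderiv ℝ (fderiv ℝ u) x (b j) (b i) :=
    fun i j => (hu.isSymmSndFDerivAt (by simp)) (b i) (b j)
  have hPiola := sum_map_update_update_of_symm_eq_zero b.det
    (fun k => fderiv ℝ u x (b k)) (w x) _ hsymm
  rw [← add_zero (∑ i, b.det _), ← hPiola, ← Finset.sum_add_distrib]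
  refine Finset.sum_congr rfl fun i _ => ?_
  rw [(hasFDerivAt_det_update b hu hw i).fderiv, sum_apply,
    ← Finset.add_sum_erase _ _ (Finset.mem_univ i)]
  congr 1
  · simp
  · refine Finset.sum_congr rfl fun j hj => ?_
    simp [Function.update_of_ne (Finset.ne_of_mem_erase hj)]

theorem sum_fderiv_flux {φ : E → ℝ} {u w : E → E} {x : E} (hφ : DifferentiableAt ℝ φ (u x))
    (hu : ContDiffAt ℝ 2 u x) (hw : DifferentiableAt ℝ w x) :
    ∑ i, fderiv ℝ (flux b φ u w i) x (b i) =
      fderiv ℝ φ (u x) (w x) * (fderiv ℝ u x).det + φ (u x) *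
        ∑ i, b.det (Function.update (fun k => fderiv ℝ u x (b k)) i (fderiv ℝ w x (b i))) := by
  have hterm : ∀ i, fderiv ℝ (flux b φ u w i) x (b i) =
      φ (u x) * fderiv ℝ (fun y =>
        b.det (Function.update (fun k => fderiv ℝ u y (b k)) i (w y))) x (b i) +
      fderiv ℝ φ (u x) (b.det (Function.update (fun k => fderiv ℝ u x (b k)) i (w x)) •
        fderiv ℝ u x (b i)) := fun i => by
    have h := (hφ.hasFDerivAt.comp x (hu.differentiableAt two_ne_zero).hasFDerivAt).mul
      (hasFDerivAt_det_update b hu hw i).differentiableAt.hasFDerivAt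
    have hfderiv : fderiv ℝ (flux b φ u w i) x = _ := h.fderiv
    simp [hfderiv]
  have hcramer : ∑ i, fderiv ℝ φ (u x)
      (b.det (Function.update (fun k => fderiv ℝ u x (b k)) i (w x)) • fderiv ℝ u x (b i)) =
      fderiv ℝ φ (u x) (w x) * (fderiv ℝ u x).det := by
    rw [← map_sum, sum_det_update_smul b (fun k => fderiv ℝ u x (b k)), map_smul, smul_eq_mul,
      continuousLinearMap_det_eq_basis_det b, mul_comm]
  simp only [hterm, Finset.sum_add_distrib, ← Finset.mul_sum, sum_fderiv_det_update b hu hw]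
  rw [hcramer, add_comm]

end Piola

section Integration

open MeasureTheory

theorem contDiff_indicator_of_forall_sdiff_eq_zero {𝕜 E F : Type*} [NontriviallyNormedField 𝕜]
    [NormedAddCommGroup E] [NormedSpace 𝕜 E] [NormedAddCommGroup F] [NormedSpace 𝕜 F]
    {k : WithTop ℕ∞} {g : E → F} {V K : Set E} (hV : IsOpen V) (hK : IsClosed K) (hKV : K ⊆ V)
    (hg : ContDiffOn 𝕜 k g V) (h0 : ∀ x ∈ V \ K, g x = 0) : ContDiff 𝕜 k (V.indicator g) := by
  refine contDiff_iff_contDiffAt.2 fun x => ?_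
  by_cases hx : x ∈ V
  · refine (hg.contDiffAt (hV.mem_nhds hx)).congr_of_eventuallyEq ?_
    filter_upwards [hV.mem_nhds hx] with y hy using indicator_of_mem hy g
  · refine (contDiffAt_const (c := (0 : F))).congr_of_eventuallyEq ?_
    filter_upwards [hK.isOpen_compl.mem_nhds fun h => hx (hKV h)] with y hy
    by_cases hyV : y ∈ V
    · rw [indicator_of_mem hyV, h0 y ⟨hyV, hy⟩]
    · exact indicator_of_notMem hyV g

section

variable {E : Type*} [NormedAddCommGroup E] [NormedSpace ℝ E] [FiniteDimensional ℝ E]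
  [MeasurableSpace E] [BorelSpace E] (μ : Measure E) [μ.IsAddHaarMeasure]

theorem integral_fderiv_eq_zero_of_hasCompactSupport {g : E → ℝ} (hg : ContDiff ℝ 1 g)
    (hc : HasCompactSupport g) (v : E) : ∫ x, fderiv ℝ g x v ∂μ = 0 := by
  have hg' : Integrable (fun x => fderiv ℝ g x v) μ :=
    ((hg.continuous_fderiv one_ne_zero).clm_apply
      continuous_const).integrable_of_hasCompactSupport (hc.fderiv_apply ℝ v)
  simpa using integral_mul_fderiv_eq_neg_fderiv_mul_of_integrable (μ := μ) (f := fun _ => (1 : ℝ))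
    (g := g) (v := v) (by simp) (by simpa using hg')
    (by simpa using hg.continuous.integrable_of_hasCompactSupport hc) (by simp)
    fun x _ => hg.differentiable one_ne_zero x

theorem setIntegral_fderiv_eq_zero_of_forall_sdiff_eq_zero {g : E → ℝ} {V K : Set E}
    (hV : IsOpen V) (hK : IsCompact K) (hKV : K ⊆ V) (hg : ContDiffOn ℝ 1 g V)
    (h0 : ∀ x ∈ V \ K, g x = 0) (v : E) : ∫ x in K, fderiv ℝ g x v ∂μ = 0 := by
  have hout : ∀ x ∉ K, V.indicator g x = 0 := fun x hx => by
    by_cases hxV : x ∈ V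
    · rw [indicator_of_mem hxV, h0 x ⟨hxV, hx⟩]
    · exact indicator_of_notMem hxV g
  have hfderiv : ∀ x ∈ V, fderiv ℝ (V.indicator g) x = fderiv ℝ g x := fun x hx =>
    Filter.EventuallyEq.fderiv_eq <| by
      filter_upwards [hV.mem_nhds hx] with y hy using indicator_of_mem hy g
  calc ∫ x in K, fderiv ℝ g x v ∂μ = ∫ x in K, fderiv ℝ (V.indicator g) x v ∂μ :=
        setIntegral_congr_fun hK.measurableSet fun x hx => by simp only [hfderiv x (hKV hx)]
    _ = ∫ x, fderiv ℝ (V.indicator g) x v ∂μ :=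
        setIntegral_eq_integral_of_forall_compl_eq_zero fun x hx => by
          have hnhds : V.indicator g =ᶠ[𝓝 x] fun _ => 0 := by
            filter_upwards [hK.isClosed.isOpen_compl.mem_nhds hx] with y hy using hout y hy
          simp [hnhds.fderiv_eq]
    _ = 0 := integral_fderiv_eq_zero_of_hasCompactSupport μ
        (contDiff_indicator_of_forall_sdiff_eq_zero hV hK.isClosed hKV hg h0)
        (HasCompactSupport.intro hK hout) v

end

theorem setIntegral_eq_of_setIntegral_deriv_eq_zero {X G : Type*} [TopologicalSpace X]
    [MeasurableSpace X] [OpensMeasurableSpace X]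
    [NormedAddCommGroup G] [NormedSpace ℝ G] [CompleteSpace G]
    (μ : Measure X) [IsFiniteMeasureOnCompacts μ] [SFinite μ] {K : Set X} (hK : IsCompact K)
    (hKm : MeasurableSet K) {F F' : ℝ → X → G}
    (hF : ∀ t ∈ Icc (0 : ℝ) 1, ContinuousOn (F t) K)
    (hderiv : ∀ t ∈ Icc (0 : ℝ) 1, ∀ x ∈ K, HasDerivAt (fun s => F s x) (F' t x) t)
    (hF' : ContinuousOn (fun p : X × ℝ => F' p.2 p.1) (K ×ˢ Icc 0 1))
    (hzero : ∀ t ∈ Icc (0 : ℝ) 1, ∫ x in K, F' t x ∂μ = 0) :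
    ∫ x in K, F 0 x ∂μ = ∫ x in K, F 1 x ∂μ := by
  have hint : ∀ t ∈ Icc (0 : ℝ) 1, IntegrableOn (F t) K μ := fun t ht =>
    (hF t ht).integrableOn_compact' hK hKm
  have hFTC : ∀ x ∈ K, F 1 x - F 0 x = ∫ t in Icc (0 : ℝ) 1, F' t x := fun x hx => by
    rw [integral_Icc_eq_integral_Ioc, ← intervalIntegral.integral_of_le zero_le_one,
      intervalIntegral.integral_eq_sub_of_hasDerivAt (f := fun t => F t x)]
    · exact fun t ht => hderiv t (by rwa [uIcc_of_le zero_le_one] at ht) x hx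
    · refine ContinuousOn.intervalIntegrable ?_
      rw [uIcc_of_le zero_le_one]
      exact hF'.comp (f := fun t => (x, t)) (by fun_prop) fun t ht => ⟨hx, ht⟩
  have hprod : IntegrableOn (fun p : X × ℝ => F' p.2 p.1) (K ×ˢ Icc 0 1) (μ.prod volume) :=
    hF'.integrableOn_compact' (hK.prod isCompact_Icc) (hKm.prod measurableSet_Icc)
  rw [eq_comm, ← sub_eq_zero, ← integral_sub (hint 1 (by simp)) (hint 0 (by simp))]
  calc ∫ x in K, F 1 x - F 0 x ∂μ = ∫ x in K, (∫ t in Icc (0 : ℝ) 1, F' t x) ∂μ :=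
        setIntegral_congr_fun hKm hFTC
    _ = ∫ t in Icc (0 : ℝ) 1, (∫ x in K, F' t x ∂μ) :=
        integral_integral_swap (by rwa [Measure.prod_restrict])
    _ = 0 := setIntegral_eq_zero_of_forall_eq_zero hzero

end Integration

section DegreeIntegral

open MeasureTheory

variable {E : Type*} [NormedAddCommGroup E] [NormedSpace ℝ E]

/-- The density of the pullback under `u` of the top-degree form with density `φ`; its integral is
the degree of `u` at `0` when `φ` is a normalized bump function supported near `0`. -/
def pullbackDensity (φ : E → ℝ) (u : E → E) (x : E) : ℝ := φ (u x) * (fderiv ℝ u x).det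

theorem contDiffOn_basis_det {ι G : Type*} [Fintype ι] [DecidableEq ι] [NormedAddCommGroup G]
    [NormedSpace ℝ G] (b : Module.Basis ι ℝ E) {k : WithTop ℕ∞} {s : Set G} {v : ι → G → E}
    (hv : ∀ i, ContDiffOn ℝ k (v i) s) : ContDiffOn ℝ k (fun x => b.det fun i => v i x) s :=
  (detMultilinear b).contDiff.comp_contDiffOn (contDiffOn_pi.2 hv)

theorem contDiffOn_flux {ι : Type*} [Fintype ι] [DecidableEq ι] (b : Module.Basis ι ℝ E)
    {φ : E → ℝ} {u w : E → E} {V : Set E} (hV : IsOpen V) (hφ : ContDiff ℝ 1 φ)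
    (hu : ContDiffOn ℝ 2 u V) (hw : ContDiffOn ℝ 1 w V) (i : ι) :
    ContDiffOn ℝ 1 (flux b φ u w i) V := by
  refine (hφ.comp_contDiffOn (hu.of_le one_le_two)).mul (contDiffOn_basis_det b fun j => ?_)
  rcases eq_or_ne j i with rfl | hji
  · simpa using hw
  · simpa [Function.update_of_ne hji] using
      (hu.fderiv_of_isOpen hV (m := 1) le_rfl).clm_apply contDiffOn_const

theorem fderiv_add_smul {u w : E → E} {x : E} (hu : DifferentiableAt ℝ u x)
    (hw : DifferentiableAt ℝ w x) (t : ℝ) :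
    fderiv ℝ (fun y => u y + t • w y) x = fderiv ℝ u x + t • fderiv ℝ w x :=
  (hu.hasFDerivAt.add (hw.hasFDerivAt.const_smul t)).fderiv

theorem hasDerivAt_pullbackDensity_add_smul {ι : Type*} [Fintype ι] [DecidableEq ι]
    (b : Module.Basis ι ℝ E) {φ : E → ℝ} {u w : E → E} {x : E} (hφ : Differentiable ℝ φ)
    (hu : ContDiffAt ℝ 2 u x) (hw : ContDiffAt ℝ 2 w x) (t : ℝ) :
    HasDerivAt (fun s : ℝ => pullbackDensity φ (fun y => u y + s • w y) x)
      (∑ i, fderiv ℝ (flux b φ (fun y => u y + t • w y) w i) x (b i)) t := by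
  have hu1 := hu.differentiableAt two_ne_zero
  have hw1 := hw.differentiableAt two_ne_zero
  have hline : HasDerivAt (fun s : ℝ => u x + s • w x) (w x) t := by
    simpa using ((hasDerivAt_id t).smul_const (w x)).const_add (u x)
  have hφt := (hφ (u x + t • w x)).hasFDerivAt.comp_hasDerivAt t hline
  rw [sum_fderiv_flux b (hφ _) (u := fun y => u y + t • w y)
    (hu.add (contDiffAt_const.smul hw)) hw1]
  simp only [pullbackDensity, fderiv_add_smul hu1 hw1]
  exact hφt.mul (hasDerivAt_det_add_smul b _ _ t)

theorem continuousOn_pullbackDensity {φ : E → ℝ} {u : E → E} {V : Set E} (hV : IsOpen V)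
    (hφ : Continuous φ) (hu : ContDiffOn ℝ 1 u V) : ContinuousOn (pullbackDensity φ u) V :=
  (hφ.comp_continuousOn hu.continuousOn).mul <| ContinuousLinearMap.continuous_det.comp_continuousOn
    (hu.continuousOn_fderiv_of_isOpen hV le_rfl)

theorem continuousOn_of_hasDerivAt_snd {G : Type*} [NormedAddCommGroup G] [NormedSpace ℝ G]
    {F F' : E × ℝ → G} {S : Set (E × ℝ)} (hS : IsOpen S) (hF : ContDiffOn ℝ 1 F S)
    (hF' : ∀ p ∈ S, HasDerivAt (fun t => F (p.1, t)) (F' p) p.2) : ContinuousOn F' S := by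
  refine ((hF.continuousOn_fderiv_of_isOpen hS le_rfl).clm_apply
    (continuousOn_const (c := ((0, 1) : E × ℝ)))).congr fun p hp => (hF' p hp).unique ?_
  have hFp := ((hF.contDiffAt (hS.mem_nhds hp)).differentiableAt one_ne_zero).hasFDerivAt
  exact hFp.comp_hasDerivAt p.2 ((hasDerivAt_const p.2 p.1).prodMk (hasDerivAt_id p.2))

variable [FiniteDimensional ℝ E]

theorem contDiffOn_pullbackDensity_add_smul {φ : E → ℝ} {u w : E → E} {V : Set E}
    (hV : IsOpen V) (hφ : ContDiff ℝ 1 φ) (hu : ContDiffOn ℝ 2 u V) (hw : ContDiffOn ℝ 2 w V) :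
    ContDiffOn ℝ 1 (fun p : E × ℝ => pullbackDensity φ (fun y => u y + p.2 • w y) p.1)
      (V ×ˢ univ) := by
  have hfst : MapsTo (Prod.fst : E × ℝ → E) (V ×ˢ univ) V := fun p hp => hp.1
  have hcomp : ∀ g : E → E, ContDiffOn ℝ 2 g V →
      ContDiffOn ℝ 1 (fun p : E × ℝ => g p.1) (V ×ˢ univ) := fun g hg =>
    (hg.of_le one_le_two).comp contDiffOn_fst hfst
  have hfderiv : ∀ g : E → E, ContDiffOn ℝ 2 g V → ∀ v,
      ContDiffOn ℝ 1 (fun p : E × ℝ => fderiv ℝ g p.1 v) (V ×ˢ univ) := fun g hg v =>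
    ((hg.fderiv_of_isOpen hV (m := 1) le_rfl).comp contDiffOn_fst hfst).clm_apply contDiffOn_const
  have hexplicit : ContDiffOn ℝ 1 (fun p : E × ℝ => φ (u p.1 + p.2 • w p.1) *
      (Module.finBasis ℝ E).det fun i => fderiv ℝ u p.1 (Module.finBasis ℝ E i) +
        p.2 • fderiv ℝ w p.1 (Module.finBasis ℝ E i)) (V ×ˢ univ) :=
    (hφ.comp_contDiffOn ((hcomp u hu).add (contDiffOn_snd.smul (hcomp w hw)))).mul <|
      contDiffOn_basis_det _ fun i => (hfderiv u hu _).add (contDiffOn_snd.smul (hfderiv w hw _))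
  refine hexplicit.congr fun p hp => ?_
  have hat : ∀ g : E → E, ContDiffOn ℝ 2 g V → DifferentiableAt ℝ g p.1 := fun g hg =>
    (hg.contDiffAt (hV.mem_nhds hp.1)).differentiableAt two_ne_zero
  simp only [pullbackDensity, fderiv_add_smul (hat u hu) (hat w hw),
    continuousLinearMap_det_eq_basis_det (Module.finBasis ℝ E)]
  simp

/-- The density of `u + t • w` changes by the divergence of a compactly supported field. -/
theorem setIntegral_pullbackDensity_add [MeasurableSpace E] [BorelSpace E] (μ : Measure E)
    [μ.IsAddHaarMeasure] {φ : E → ℝ} {u w : E → E} {V K : Set E} (hV : IsOpen V)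
    (hK : IsCompact K) (hKV : K ⊆ V) (hφ : ContDiff ℝ 1 φ) (hu : ContDiffOn ℝ 2 u V)
    (hw : ContDiffOn ℝ 2 w V)
    (h0 : ∀ t ∈ Icc (0 : ℝ) 1, ∀ x ∈ V \ K, φ (u x + t • w x) = 0) :
    ∫ x in K, pullbackDensity φ (fun y => u y + w y) x ∂μ = ∫ x in K, pullbackDensity φ u x ∂μ := by
  set b := Module.finBasis ℝ E
  set U : ℝ → E → E := fun t y => u y + t • w y with hU
  have hUC : ∀ t, ContDiffOn ℝ 2 (U t) V := fun t => hu.add (contDiffOn_const.smul hw)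
  have hderiv : ∀ t, ∀ x ∈ V, HasDerivAt (fun s => pullbackDensity φ (U s) x)
      (∑ i, fderiv ℝ (flux b φ (U t) w i) x (b i)) t := fun t x hx =>
    hasDerivAt_pullbackDensity_add_smul b (hφ.differentiable one_ne_zero)
      (hu.contDiffAt (hV.mem_nhds hx)) (hw.contDiffAt (hV.mem_nhds hx)) t
  have hcont : ContinuousOn (fun p : E × ℝ => ∑ i, fderiv ℝ (flux b φ (U p.2) w i) p.1 (b i))
      (V ×ˢ univ) :=
    continuousOn_of_hasDerivAt_snd (hV.prod isOpen_univ)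
      (contDiffOn_pullbackDensity_add_smul hV hφ hu hw) fun p hp => hderiv p.2 p.1 hp.1
  have hflux : ∀ t ∈ Icc (0 : ℝ) 1,
      ∫ x in K, ∑ i, fderiv ℝ (flux b φ (U t) w i) x (b i) ∂μ = 0 := fun t ht => by
    have hfluxC := fun i => contDiffOn_flux b hV hφ (hUC t) (hw.of_le one_le_two) i
    rw [integral_finsetSum]
    · refine Finset.sum_eq_zero fun i _ => setIntegral_fderiv_eq_zero_of_forall_sdiff_eq_zero μ hV
        hK hKV (hfluxC i) (fun x hx => ?_) (b i)
      simp only [flux, hU, h0 t ht x hx, zero_mul]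
    · exact fun i _ => ((((hfluxC i).continuousOn_fderiv_of_isOpen hV le_rfl).mono
        hKV).clm_apply continuousOn_const).integrableOn_compact hK
  have hends := setIntegral_eq_of_setIntegral_deriv_eq_zero μ hK hK.measurableSet
    (fun t _ => (continuousOn_pullbackDensity hV hφ.continuous
      ((hUC t).of_le one_le_two)).mono hKV) (fun t _ x hx => hderiv t x (hKV hx))
    (hcont.mono (prod_mono hKV (subset_univ _))) hflux
  simpa [hU] using hends.symm

end DegreeIntegral

section CountingZeros

open MeasureTheory

theorem exists_pos_forall_le_norm {X G : Type*} [TopologicalSpace X] [NormedAddCommGroup G]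
    {C : Set X} (hC : IsCompact C) {u : X → G} (hu : ContinuousOn u C) (h0 : ∀ x ∈ C, u x ≠ 0) :
    ∃ ε > 0, ∀ x ∈ C, ε ≤ ‖u x‖ :=
  hC.exists_forall_le' hu.norm fun x hx => norm_pos_iff.2 (h0 x hx)

theorem exists_isOpen_injOn_image_mem_nhds {𝕜 E F : Type*} [RCLike 𝕜] [NormedAddCommGroup E]
    [NormedSpace 𝕜 E] [CompleteSpace E] [NormedAddCommGroup F] [NormedSpace 𝕜 F] [CompleteSpace F]
    {u : E → F} {x : E} (hu : ContDiffAt 𝕜 1 u x) (hreg : Function.Bijective (fderiv 𝕜 u x))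
    {U : Set E} (hU : U ∈ 𝓝 x) :
    ∃ W ⊆ U, IsOpen W ∧ x ∈ W ∧ InjOn u W ∧ u '' W ∈ 𝓝 (u x) := by
  have hstrict : HasStrictFDerivAt u (ContinuousLinearEquiv.ofBijective (fderiv 𝕜 u x)
      (LinearMap.ker_eq_bot.2 hreg.1) (LinearMap.range_eq_top.2 hreg.2) : E →L[𝕜] F) x :=
    hu.hasStrictFDerivAt one_ne_zero
  have hW : (hstrict.toOpenPartialHomeomorph u).source ∩ interior U ∈ 𝓝 x :=
    inter_mem (hstrict.toOpenPartialHomeomorph u |>.open_source.mem_nhds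
      hstrict.mem_toOpenPartialHomeomorph_source) (interior_mem_nhds.2 hU)
  refine ⟨(hstrict.toOpenPartialHomeomorph u).source ∩ interior U,
    inter_subset_right.trans interior_subset,
    (hstrict.toOpenPartialHomeomorph u).open_source.inter isOpen_interior, mem_of_mem_nhds hW,
    (hstrict.toOpenPartialHomeomorph u).injOn.mono inter_subset_left, ?_⟩
  exact hstrict.map_nhds_eq_of_equiv ▸ image_mem_map hW

variable {E : Type*} [NormedAddCommGroup E] [NormedSpace ℝ E] [FiniteDimensional ℝ E]
  {u : E → E} {K : Set E}

theorem finite_zeros_of_bijective_fderiv (hK : IsCompact K) (hu : ∀ x ∈ K, ContDiffAt ℝ 1 u x)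
    (hreg : ∀ x ∈ K, u x = 0 → Function.Bijective (fderiv ℝ u x)) : {x ∈ K | u x = 0}.Finite := by
  have : CompleteSpace E := FiniteDimensional.complete ℝ E
  have hcont : ContinuousOn u K := fun x hx => (hu x hx).continuousAt.continuousWithinAt
  have hcompact : IsCompact {x ∈ K | u x = 0} :=
    hK.of_isClosed_subset (hcont.preimage_isClosed_of_isClosed hK.isClosed isClosed_singleton)
      inter_subset_left
  refine hcompact.finite (isDiscrete_iff_forall_mem_exists_isOpen.2 fun x hx => ?_)
  obtain ⟨W, -, hWo, hxW, hinj, -⟩ :=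
    exists_isOpen_injOn_image_mem_nhds (hu x hx.1) (hreg x hx.1 hx.2) univ_mem
  refine ⟨W, hWo, Subset.antisymm (fun y hy => hinj hy.1 hxW ?_) (singleton_subset_iff.2 ⟨hxW, hx⟩)⟩
  rw [hy.2.2, hx.2]

theorem exists_disjoint_nbhds_of_zeros (hK : IsCompact K) (hu : ∀ x ∈ K, ContDiffAt ℝ 1 u x)
    (hint : ∀ x ∈ K, u x = 0 → x ∈ interior K)
    (hreg : ∀ x ∈ K, u x = 0 → Function.Bijective (fderiv ℝ u x)) :
    ∃ W : E → Set E, {x ∈ K | u x = 0}.PairwiseDisjoint W ∧ ∀ x ∈ K, u x = 0 →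
      W x ⊆ K ∧ IsOpen (W x) ∧ x ∈ W x ∧ InjOn u (W x) ∧ u '' W x ∈ 𝓝 0 := by
  obtain ⟨S, hS, hdisj⟩ := (finite_zeros_of_bijective_fderiv hK hu hreg).t2_separation
  have := FiniteDimensional.complete ℝ E
  have hloc : ∀ x ∈ {x ∈ K | u x = 0}, ∃ W ⊆ K ∩ S x, IsOpen W ∧ x ∈ W ∧ InjOn u W ∧
      u '' W ∈ 𝓝 (u x) := fun x hx =>
    exists_isOpen_injOn_image_mem_nhds (hu x hx.1) (hreg x hx.1 hx.2)
      (inter_mem (mem_interior_iff_mem_nhds.1 (hint x hx.1 hx.2)) ((hS x).2.mem_nhds (hS x).1))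
  choose! W hWsub hWo hxW hWinj hWimg using hloc
  exact ⟨W, fun x hx y hy hxy => (hdisj hx hy hxy).mono ((hWsub x hx).trans inter_subset_right)
    ((hWsub y hy).trans inter_subset_right), fun x hx hx0 =>
    ⟨(hWsub x ⟨hx, hx0⟩).trans inter_subset_left, hWo x ⟨hx, hx0⟩, hxW x ⟨hx, hx0⟩,
      hWinj x ⟨hx, hx0⟩, hx0 ▸ hWimg x ⟨hx, hx0⟩⟩⟩

variable [MeasurableSpace E] [BorelSpace E] (μ : Measure E) [μ.IsAddHaarMeasure]

theorem setIntegral_comp_mul_abs_det_fderiv {W : Set E} (hW : MeasurableSet W)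
    (hu : ∀ x ∈ W, DifferentiableAt ℝ u x) (hinj : InjOn u W) {φ : E → ℝ}
    (hφ : Function.support φ ⊆ u '' W) :
    ∫ x in W, φ (u x) * |(fderiv ℝ u x).det| ∂μ = ∫ y, φ y ∂μ := by
  rw [← setIntegral_eq_integral_of_forall_compl_eq_zero fun y hy =>
      Function.notMem_support.1 fun h => hy (hφ h),
    integral_image_eq_integral_abs_det_fderiv_smul μ hW
      (fun x hx => (hu x hx).hasFDerivAt.hasFDerivWithinAt) hinj]
  simp only [smul_eq_mul, mul_comm]

theorem setIntegral_comp_mul_abs_det_fderiv_eq_card_mul (hK : IsCompact K)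
    (hu : ∀ x ∈ K, ContDiffAt ℝ 1 u x) {ι : Type*} {Z : Finset ι} {W : ι → Set E}
    (hdisj : (Z : Set ι).PairwiseDisjoint W) (hWK : ∀ i ∈ Z, W i ⊆ K) (hWo : ∀ i ∈ Z, IsOpen (W i))
    (hinj : ∀ i ∈ Z, InjOn u (W i)) {φ : E → ℝ} (hφ : Continuous φ)
    (himg : ∀ i ∈ Z, Function.support φ ⊆ u '' W i)
    (h0 : ∀ x ∈ K \ ⋃ i ∈ Z, W i, φ (u x) = 0) :
    ∫ x in K, φ (u x) * |(fderiv ℝ u x).det| ∂μ = Z.card * ∫ y, φ y ∂μ := by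
  have hintegrable : IntegrableOn (fun x => φ (u x) * |(fderiv ℝ u x).det|) K μ := by
    have hcont : ContinuousOn u K := fun x hx => (hu x hx).continuousAt.continuousWithinAt
    refine ContinuousOn.integrableOn_compact hK ((hφ.comp_continuousOn hcont).mul ?_)
    exact (ContinuousLinearMap.continuous_det.comp_continuousOn fun x hx =>
      ((hu x hx).fderiv_right (m := 0) le_rfl).continuousAt.continuousWithinAt).abs
  calc ∫ x in K, φ (u x) * |(fderiv ℝ u x).det| ∂μ
      = ∫ x in ⋃ i ∈ Z, W i, φ (u x) * |(fderiv ℝ u x).det| ∂μ :=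
        setIntegral_eq_of_subset_of_forall_sdiff_eq_zero hK.measurableSet (iUnion₂_subset hWK)
          fun x hx => by rw [h0 x hx, zero_mul]
    _ = ∑ i ∈ Z, ∫ x in W i, φ (u x) * |(fderiv ℝ u x).det| ∂μ :=
        integral_biUnion_finset _ (fun i hi => (hWo i hi).measurableSet) hdisj
          fun i hi => hintegrable.mono_set (hWK i hi)
    _ = ∑ _i ∈ Z, ∫ y, φ y ∂μ := Finset.sum_congr rfl fun i hi =>
        setIntegral_comp_mul_abs_det_fderiv μ (hWo i hi).measurableSet
          (fun x hx => (hu x (hWK i hi hx)).differentiableAt one_ne_zero) (hinj i hi) (himg i hi)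
    _ = Z.card * ∫ y, φ y ∂μ := by rw [Finset.sum_const, nsmul_eq_mul]

theorem exists_forall_setIntegral_eq_ncard_zeros_mul (hK : IsCompact K)
    (hu : ∀ x ∈ K, ContDiffAt ℝ 1 u x) (hint : ∀ x ∈ K, u x = 0 → x ∈ interior K)
    (hreg : ∀ x ∈ K, u x = 0 → Function.Bijective (fderiv ℝ u x)) :
    ∃ ε > 0, ∀ φ : E → ℝ, Continuous φ → Function.support φ ⊆ ball 0 ε →
      ∫ x in K, φ (u x) * |(fderiv ℝ u x).det| ∂μ = {x ∈ K | u x = 0}.ncard * ∫ y, φ y ∂μ := by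
  have hfin := finite_zeros_of_bijective_fderiv hK hu hreg
  obtain ⟨W, hdisj, hW⟩ := exists_disjoint_nbhds_of_zeros hK hu hint hreg
  have hZ : ∀ x ∈ hfin.toFinset, x ∈ K ∧ u x = 0 := fun x hx => hfin.mem_toFinset.1 hx
  obtain ⟨ε₁, hε₁, himg⟩ : ∃ ε > 0, ball 0 ε ⊆ ⋂ x ∈ {x ∈ K | u x = 0}, u '' W x :=
    Metric.mem_nhds_iff.1 ((biInter_mem hfin).2 fun x hx => (hW x hx.1 hx.2).2.2.2.2)
  have hopen : IsOpen (⋃ x ∈ hfin.toFinset, W x) :=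
    isOpen_biUnion fun x hx => (hW x (hZ x hx).1 (hZ x hx).2).2.1
  obtain ⟨ε₂, hε₂, hlower⟩ := exists_pos_forall_le_norm (hK.diff hopen)
    (fun x hx => (hu x hx.1).continuousAt.continuousWithinAt) fun x hx hx0 =>
      hx.2 (mem_biUnion (hfin.mem_toFinset.2 ⟨hx.1, hx0⟩) (hW x hx.1 hx0).2.2.1)
  refine ⟨min ε₁ ε₂, lt_min hε₁ hε₂, fun φ hφ hsupp => ?_⟩
  rw [ncard_eq_toFinset_card _ hfin]
  refine setIntegral_comp_mul_abs_det_fderiv_eq_card_mul μ hK hu (by rwa [hfin.coe_toFinset])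
    (fun x hx => (hW x (hZ x hx).1 (hZ x hx).2).1) (fun x hx => (hW x (hZ x hx).1 (hZ x hx).2).2.1)
    (fun x hx => (hW x (hZ x hx).1 (hZ x hx).2).2.2.2.1) hφ (fun x hx => ?_) fun x hx => ?_
  · exact hsupp.trans <| (ball_subset_ball (min_le_left _ _)).trans <| himg.trans <|
      biInter_subset_of_mem (hfin.mem_toFinset.1 hx)
  · refine Function.notMem_support.1 fun h => ?_
    exact (mem_ball_zero_iff.1 (hsupp h)).not_ge ((min_le_right _ _).trans (hlower x hx))

end CountingZeros

section Rouche

open MeasureTheory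

section

variable {E : Type*} [NormedAddCommGroup E] [NormedSpace ℝ E] [FiniteDimensional ℝ E]
  {V K : Set E} {η : ℝ}

theorem exists_forall_setIntegral_pullbackDensity_eq_ncard_zeros_mul [MeasurableSpace E]
    [BorelSpace E] (μ : Measure E) [μ.IsAddHaarMeasure] {u : E → E} (hK : IsCompact K)
    (hKV : K ⊆ V) (hu : ∀ x ∈ V, ContDiffAt ℝ 1 u x) (hout : ∀ x ∈ V \ interior K, u x ≠ 0)
    (hdet : ∀ x ∈ V, 0 ≤ (fderiv ℝ u x).det)
    (hreg : ∀ x ∈ V, u x = 0 → Function.Bijective (fderiv ℝ u x)) :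
    ∃ ε > 0, ∀ φ : E → ℝ, Continuous φ → Function.support φ ⊆ ball 0 ε →
      ∫ x in K, pullbackDensity φ u x ∂μ = {x ∈ V | u x = 0}.ncard * ∫ y, φ y ∂μ := by
  have hint : ∀ x ∈ V, u x = 0 → x ∈ interior K := fun x hx hx0 =>
    by_contra fun h => hout x ⟨hx, h⟩ hx0
  have hzeros : {x ∈ K | u x = 0} = {x ∈ V | u x = 0} := Subset.antisymm
    (fun x hx => ⟨hKV hx.1, hx.2⟩) fun x hx => ⟨interior_subset (hint x hx.1 hx.2), hx.2⟩
  obtain ⟨ε, hε, hcount⟩ := exists_forall_setIntegral_eq_ncard_zeros_mul μ hK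
    (fun x hx => hu x (hKV hx)) (fun x hx => hint x (hKV hx)) fun x hx => hreg x (hKV hx)
  refine ⟨ε, hε, fun φ hφ hsupp => ?_⟩
  rw [← hzeros, ← hcount φ hφ hsupp]
  exact setIntegral_congr_fun hK.measurableSet fun x hx => by
    simp only [pullbackDensity, abs_of_nonneg (hdet x (hKV hx))]

theorem ncard_zeros_eq_of_det_nonneg {u v : E → E} (hη : 0 < η) (hV : IsOpen V)
    (hK : IsCompact K) (hKV : K ⊆ V) (hu : ContDiffOn ℝ 2 u V) (hv : ContDiffOn ℝ 2 v V)
    (hout : ∀ t ∈ Icc (0 : ℝ) 1, ∀ x ∈ V \ interior K, η ≤ ‖u x + t • (v x - u x)‖)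
    (hdetu : ∀ x ∈ V, 0 ≤ (fderiv ℝ u x).det) (hdetv : ∀ x ∈ V, 0 ≤ (fderiv ℝ v x).det)
    (hregu : ∀ x ∈ V, u x = 0 → Function.Bijective (fderiv ℝ u x))
    (hregv : ∀ x ∈ V, v x = 0 → Function.Bijective (fderiv ℝ v x)) :
    {x ∈ V | u x = 0}.ncard = {x ∈ V | v x = 0}.ncard := by
  borelize E
  set μ : Measure E := Measure.addHaar
  have hC1 : ∀ g : E → E, ContDiffOn ℝ 2 g V → ∀ x ∈ V, ContDiffAt ℝ 1 g x := fun g hg x hx =>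
    (hg.contDiffAt (hV.mem_nhds hx)).of_le one_le_two
  obtain ⟨ε₁, hε₁, hcountu⟩ := exists_forall_setIntegral_pullbackDensity_eq_ncard_zeros_mul μ hK
    hKV (hC1 u hu) (fun x hx => norm_pos_iff.1 <| hη.trans_le <| by
      simpa using hout 0 (by simp) x hx) hdetu hregu
  obtain ⟨ε₂, hε₂, hcountv⟩ := exists_forall_setIntegral_pullbackDensity_eq_ncard_zeros_mul μ hK
    hKV (hC1 v hv) (fun x hx => norm_pos_iff.1 <| hη.trans_le <| by
      simpa using hout 1 (by simp) x hx) hdetv hregv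
  have hε : 0 < min (min ε₁ ε₂) η := lt_min (lt_min hε₁ hε₂) hη
  let φ : ContDiffBump (0 : E) := ⟨_, _, half_pos hε, half_lt_self hε⟩
  have hsupp : Function.support φ ⊆ ball 0 (min (min ε₁ ε₂) η) := φ.support_eq.subset
  have hhomotopy : ∫ x in K, pullbackDensity φ v x ∂μ = ∫ x in K, pullbackDensity φ u x ∂μ := by
    simpa using setIntegral_pullbackDensity_add μ hV hK hKV φ.contDiff hu (hv.sub hu)
      fun t ht x hx => Function.notMem_support.1 fun h =>
        (mem_ball_zero_iff.1 (hsupp h)).not_ge <| (min_le_right _ _).trans <|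
          hout t ht x ⟨hx.1, fun hxK => hx.2 (interior_subset hxK)⟩
  rw [hcountu φ φ.continuous (hsupp.trans (ball_subset_ball (by simp))),
    hcountv φ φ.continuous (hsupp.trans (ball_subset_ball (by simp)))] at hhomotopy
  exact_mod_cast (mul_right_cancel₀ φ.integral_pos.ne' hhomotopy).symm

end

variable {E : Type*} [NormedAddCommGroup E] [NormedSpace ℂ E]

theorem det_restrictScalars_nonneg (A : E →L[ℂ] E) : 0 ≤ (A.restrictScalars ℝ).det := by
  have hdet : (A.restrictScalars ℝ).det = Algebra.norm ℝ A.det := LinearMap.det_restrictScalars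
  rw [hdet, Algebra.norm_complex_apply]
  exact Complex.normSq_nonneg _

theorem le_norm_add_smul_of_le_sub {F : Type*} [SeminormedAddCommGroup F] [NormedSpace ℝ F]
    {a b : F} {t η : ℝ} (ht : t ∈ Icc (0 : ℝ) 1) (h : η ≤ ‖a‖ - ‖b‖) : η ≤ ‖a + t • b‖ := by
  have hsmul : ‖t • b‖ ≤ ‖b‖ := by
    rw [norm_smul, Real.norm_of_nonneg ht.1]
    exact mul_le_of_le_one_left (norm_nonneg b) ht.2
  linarith [norm_le_add_norm_add a (t • b)]

theorem exists_isCompact_forall_le_of_forall_frontier_pos {X : Type*} [TopologicalSpace X]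
    {V : Set X} {g : X → ℝ} (hV : IsOpen V) (hc : IsCompact (closure V))
    (hg : ContinuousOn g (closure V)) (h0 : ∀ x ∈ frontier V, 0 < g x) :
    ∃ K ⊆ V, IsCompact K ∧ ∃ η > 0, ∀ x ∈ V \ interior K, η ≤ g x := by
  obtain ⟨δ, hδ, hle⟩ := (hc.of_isClosed_subset isClosed_frontier
    frontier_subset_closure).exists_forall_le' (hg.mono frontier_subset_closure) h0
  have hK : closure V ∩ g ⁻¹' Iic (δ / 2) ⊆ V := fun x hx => by
    by_contra hxV
    have hδx := hle x ⟨hx.1, fun h => hxV (interior_subset h)⟩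
    linarith [show g x ≤ δ / 2 from hx.2]
  refine ⟨closure V ∩ g ⁻¹' Iic (δ / 2), hK, hc.of_isClosed_subset
    (hg.preimage_isClosed_of_isClosed isClosed_closure isClosed_Iic) inter_subset_left, δ / 2,
    half_pos hδ, fun x hx => ?_⟩
  by_contra! hlt
  refine hx.2 (mem_interior.2 ⟨V ∩ g ⁻¹' Iio (δ / 2), ?_, ?_, hx.1, hlt⟩)
  · exact inter_subset_inter subset_closure (preimage_mono Iio_subset_Iic_self)
  · exact (hg.mono subset_closure).isOpen_inter_preimage hV isOpen_Iio

theorem ncard_zeros_eq_of_forall_frontier_norm_sub_lt [FiniteDimensional ℂ E] {u v : E → E}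
    {V : Set E} (hV : IsOpen V) (hb : Bornology.IsBounded V) (hu : AnalyticOnNhd ℂ u V)
    (hv : AnalyticOnNhd ℂ v V) (huc : ContinuousOn u (closure V))
    (hvc : ContinuousOn v (closure V)) (hlt : ∀ x ∈ frontier V, ‖v x - u x‖ < ‖u x‖)
    (hregu : ∀ x ∈ V, u x = 0 → Function.Bijective (fderiv ℂ u x))
    (hregv : ∀ x ∈ V, v x = 0 → Function.Bijective (fderiv ℂ v x)) :
    {x ∈ V | u x = 0}.ncard = {x ∈ V | v x = 0}.ncard := by
  have := FiniteDimensional.proper ℂ E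
  have := FiniteDimensional.complete ℂ E
  obtain ⟨K, hKV, hK, η, hη, hle⟩ := exists_isCompact_forall_le_of_forall_frontier_pos
    (g := fun x => ‖u x‖ - ‖v x - u x‖) hV hb.isCompact_closure
    (huc.norm.sub (hvc.sub huc).norm) fun x hx => sub_pos.2 (hlt x hx)
  have hC2 : ∀ g : E → E, AnalyticOnNhd ℂ g V → ContDiffOn ℝ 2 g V := fun g hg =>
    (hg.contDiffOn hV.uniqueDiffOn).restrict_scalars ℝ
  have hfderiv : ∀ g : E → E, AnalyticOnNhd ℂ g V → ∀ x ∈ V,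
      fderiv ℝ g x = (fderiv ℂ g x).restrictScalars ℝ := fun g hg x hx =>
    (hg x hx).differentiableAt.fderiv_restrictScalars ℝ
  refine ncard_zeros_eq_of_det_nonneg hη hV hK hKV (hC2 u hu) (hC2 v hv)
    (fun t ht x hx => le_norm_add_smul_of_le_sub ht (hle x hx)) (fun x hx => ?_) (fun x hx => ?_)
    (fun x hx h => ?_) fun x hx h => ?_
  · rw [hfderiv u hu x hx]
    exact det_restrictScalars_nonneg _
  · rw [hfderiv v hv x hx]
    exact det_restrictScalars_nonneg _
  · rw [hfderiv u hu x hx]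
    exact hregu x hx h
  · rw [hfderiv v hv x hx]
    exact hregv x hx h

theorem exists_mem_ball_forall_bijective_fderiv [FiniteDimensional ℂ E] {u : E → E} {s : Set E}
    (hu : ∀ x ∈ s, DifferentiableAt ℂ u x) (y : E) {ε : ℝ} (hε : 0 < ε) :
    ∃ q ∈ ball y ε, ∀ x ∈ s, u x = q → Function.Bijective (fderiv ℂ u x) := by
  borelize E
  set μ : Measure E := Measure.addHaar
  set S : Set E := {x ∈ s | ¬Function.Bijective (fderiv ℂ u x)}
  have hnull : μ (u '' S) = 0 := by
    refine addHaar_image_eq_zero_of_det_fderivWithin_eq_zero μ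
      (f' := fun x => (fderiv ℂ u x).restrictScalars ℝ) (fun x hx =>
        ((hu x hx.1).hasFDerivAt.restrictScalars ℝ).hasFDerivWithinAt) fun x hx => ?_
    by_contra hdet
    have hunit := (LinearMap.isUnit_iff_isUnit_det
      ((fderiv ℂ u x).restrictScalars ℝ : E →ₗ[ℝ] E)).2 (isUnit_iff_ne_zero.2 hdet)
    have hbij := (Module.End.isUnit_iff _).1 hunit
    exact hx.2 hbij
  obtain ⟨q, hq, hqS⟩ : (ball y ε \ u '' S).Nonempty :=
    nonempty_of_measure_ne_zero (μ := μ) <| by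
      rw [measure_sdiff_null hnull]
      exact (measure_ball_pos μ y hε).ne'
  exact ⟨q, hq, fun x hx hxq => by_contra fun h => hqS ⟨x, ⟨hx, h⟩, hxq⟩⟩

end Rouche

section ZeroOrder

variable {h k : Cn n → Cn n} {p : Cn n} {m : ℕ} {r : ℝ}

theorem IsRegularValueOn.mono {s t : Set (Cn n)} {q : Cn n} (hq : IsRegularValueOn h t q)
    (hst : s ⊆ t) : IsRegularValueOn h s q := fun x hx => hq x (hst hx)

theorem isRegularValueOn_continuousLinearEquiv_comp_iff (L : Cn n ≃L[ℂ] Cn n) {s : Set (Cn n)}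
    {q : Cn n} : IsRegularValueOn (fun x => L (h x)) s q ↔ IsRegularValueOn h s (L.symm q) :=
  forall₂_congr fun x _ => by
    rw [L.eq_symm_apply, show fderiv ℂ (fun x => L (h x)) x = (L : Cn n →L[ℂ] Cn n) ∘L fderiv ℂ h x
      from L.comp_fderiv, ContinuousLinearMap.coe_comp, ContinuousLinearEquiv.coe_coe,
      Function.Bijective.of_comp_iff' L.bijective]

theorem exists_norm_lt_isRegularValueOn {s : Set (Cn n)} (hh : AnalyticOnNhd ℂ h s) {ε : ℝ}
    (hε : 0 < ε) : ∃ q : Cn n, ‖q‖ < ε ∧ IsRegularValueOn h s q := by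
  simpa only [IsRegularValueOn, mem_ball_zero_iff] using
    exists_mem_ball_forall_bijective_fderiv (fun x hx => (hh x hx).differentiableAt) 0 hε

theorem ncard_preimage_eq_of_norm_sub_le_half {m₀ : ℝ} {q q' : Cn n}
    (hh : AnalyticOnNhd ℂ h (closedBall p r)) (hk : AnalyticOnNhd ℂ k (closedBall p r))
    (hlower : ∀ x ∈ sphere p r, m₀ ≤ ‖h x‖) (hm₀ : 0 < m₀)
    (hclose : ∀ x ∈ sphere p r, ‖k x - h x‖ ≤ 1 / 2 * ‖h x‖) (hq : ‖q‖ < m₀ / 8)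
    (hq' : ‖q'‖ < m₀ / 8) (hregh : IsRegularValueOn h (ball p r) q)
    (hregk : IsRegularValueOn k (ball p r) q') :
    {x ∈ ball p r | h x = q}.ncard = {x ∈ ball p r | k x = q'}.ncard := by
  have hana : ∀ g : Cn n → Cn n, AnalyticOnNhd ℂ g (closedBall p r) → ∀ c,
      AnalyticOnNhd ℂ (fun x => g x - c) (closedBall p r) := fun g hg c x hx =>
    (hg x hx).sub analyticAt_const
  have hreg : ∀ (g : Cn n → Cn n) c, IsRegularValueOn g (ball p r) c → ∀ x ∈ ball p r,
      g x - c = 0 → Function.Bijective (fderiv ℂ (fun y => g y - c) x) := fun g c hg x hx h0 => by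
    simpa only [fderiv_sub_const] using hg x hx (sub_eq_zero.1 h0)
  have hrouche := ncard_zeros_eq_of_forall_frontier_norm_sub_lt isOpen_ball isBounded_ball
    ((hana h hh q).mono ball_subset_closedBall) ((hana k hk q').mono ball_subset_closedBall)
    ((hana h hh q).continuousOn.mono closure_ball_subset_closedBall)
    ((hana k hk q').continuousOn.mono closure_ball_subset_closedBall) (fun x hx => ?_)
    (hreg h q hregh) (hreg k q' hregk)
  · simpa only [sub_eq_zero] using hrouche
  · have hx' := frontier_ball_subset_sphere hx
    have hdiff : ‖k x - q' - (h x - q)‖ ≤ ‖k x - h x‖ + ‖q - q'‖ := by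
      rw [show k x - q' - (h x - q) = k x - h x + (q - q') by abel]
      exact norm_add_le _ _
    linarith [hlower x hx', hclose x hx', norm_sub_le q q', norm_sub_norm_le (h x) q]

theorem eq_zero_iff_of_norm_sub_le_half {G : Type*} [NormedAddCommGroup G] {a b : G}
    (hab : ‖a - b‖ ≤ 1 / 2 * ‖b‖) : a = 0 ↔ b = 0 := by
  refine ⟨?_, ?_⟩ <;> rintro rfl
  · rw [zero_sub, norm_neg] at hab
    exact norm_le_zero_iff.1 (by linarith)
  · simpa using hab

theorem HasZeroOrder.of_isEquivalent (hh : HasZeroOrder h p m) (hk : AnalyticAt ℂ k p)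
    (hkh : k ~[𝓝 p] h) : HasZeroOrder k p m := by
  obtain ⟨r₀, hr₀, hana, hp, hzero, -, δ, hδ, hcount⟩ := hh
  obtain ⟨r, hr, hnear⟩ := nhds_basis_closedBall.eventually_iff.1 <|
    (hk.eventually_analyticAt.and (hkh.bound one_half_pos)).and (ball_mem_nhds p hr₀)
  have hkana : AnalyticOnNhd ℂ k (closedBall p r) := fun x hx => (hnear hx).1.1
  have hclose : ∀ x ∈ closedBall p r, ‖k x - h x‖ ≤ 1 / 2 * ‖h x‖ := fun x hx => (hnear hx).1.2
  have hrr₀ : closedBall p r ⊆ ball p r₀ := fun x hx => (hnear hx).2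
  obtain ⟨m₀, hm₀, hlower⟩ := exists_pos_forall_le_norm
    ((isCompact_closedBall p r₀).diff (isOpen_ball : IsOpen (ball p r)))
    (hana.continuousOn.mono sdiff_subset) fun x hx h0 => hx.2 <| by
      rw [hzero x hx.1 h0]
      exact mem_ball_self hr
  obtain ⟨q₀, hq₀, hreg₀⟩ := exists_norm_lt_isRegularValueOn
    (hana.mono ball_subset_closedBall) (lt_min hδ (by positivity : 0 < m₀ / 8))
  rw [lt_min_iff] at hq₀
  have hball : {x ∈ ball p r | h x = q₀} = {x ∈ ball p r₀ | h x = q₀} := Subset.antisymm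
    (fun x hx => ⟨hrr₀ (ball_subset_closedBall hx.1), hx.2⟩) fun x hx => ⟨by_contra fun hxr => by
      linarith [hx.2 ▸ hlower x ⟨ball_subset_closedBall hx.1, hxr⟩], hx.2⟩
  have hsphere : sphere p r ⊆ closedBall p r₀ \ ball p r := fun x hx =>
    ⟨ball_subset_closedBall (hrr₀ (sphere_subset_closedBall hx)),
      sphere_disjoint_ball.notMem_of_mem_left hx⟩
  refine ⟨r, hr, hkana,
    (eq_zero_iff_of_norm_sub_le_half (hclose p (mem_closedBall_self hr.le))).2 hp,
    fun x hx h0 => hzero x (ball_subset_closedBall (hrr₀ hx))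
      ((eq_zero_iff_of_norm_sub_le_half (hclose x hx)).1 h0),
    fun ε hε => exists_norm_lt_isRegularValueOn (hkana.mono ball_subset_closedBall) hε,
    m₀ / 8, by positivity, fun q hq hreg => ?_⟩
  rw [← hcount q₀ hq₀.1 hreg₀, ← hball]
  exact (ncard_preimage_eq_of_norm_sub_le_half (hana.mono (hrr₀.trans ball_subset_closedBall))
    hkana (fun x hx => hlower x (hsphere hx)) hm₀
    (fun x hx => hclose x (sphere_subset_closedBall hx)) hq₀.2 hq
    (hreg₀.mono (ball_subset_closedBall.trans hrr₀)) hreg).symm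

theorem HasZeroOrder.continuousLinearEquiv_comp (L : Cn n ≃L[ℂ] Cn n) (hh : HasZeroOrder h p m) :
    HasZeroOrder (fun x => L (h x)) p m := by
  obtain ⟨r, hr, hana, hp, hzero, -, δ, hδ, hcount⟩ := hh
  have hLana : AnalyticOnNhd ℂ (fun x => L (h x)) (closedBall p r) := fun x hx =>
    ((L : Cn n →L[ℂ] Cn n).analyticAt _).comp (hana x hx)
  obtain ⟨ρ, hρ, hsmall⟩ : ∃ ρ > 0, ball 0 ρ ⊆ L.symm ⁻¹' ball 0 δ :=
    Metric.mem_nhds_iff.1 <| L.symm.continuous.continuousAt.preimage_mem_nhds <| by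
      simpa using ball_mem_nhds 0 hδ
  refine ⟨r, hr, hLana, by simp [hp], fun x hx h0 => hzero x hx (by simpa using h0),
    fun ε hε => exists_norm_lt_isRegularValueOn (hLana.mono ball_subset_closedBall) hε, ρ, hρ,
    fun q hq hreg => ?_⟩
  rw [← hcount (L.symm q) (mem_ball_zero_iff.1 (hsmall (mem_ball_zero_iff.2 hq)))
    ((isRegularValueOn_continuousLinearEquiv_comp_iff L).1 hreg)]
  simp only [L.eq_symm_apply]

theorem zeroOrder_eq_of_sub_isLittleO (L : Cn n ≃L[ℂ] Cn n) (hh : AnalyticAt ℂ h p)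
    (hk : AnalyticAt ℂ k p) (hkh : (fun x => k x - L (h x)) =o[𝓝 p] h) :
    zeroOrder k p = zeroOrder h p := by
  have hequiv : (fun x => L.symm (k x)) ~[𝓝 p] h := by
    refine IsBigO.trans_isLittleO ?_ hkh
    simpa using (L.symm : Cn n →L[ℂ] Cn n).isBigO_comp (fun x => k x - L (h x)) (𝓝 p)
  refine congrArg sInf (Set.ext fun m => ⟨fun hm => ?_, fun hm => ?_⟩)
  · exact (hm.continuousLinearEquiv_comp L.symm).of_isEquivalent hh hequiv.symm
  · simpa using (hm.of_isEquivalent (((L.symm : Cn n →L[ℂ] Cn n).analyticAt _).comp hk)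
      hequiv).continuousLinearEquiv_comp L

end ZeroOrder
section Periods

open Function

variable {α : Type*} {g : α → α} {x : α} {m : ℕ}

theorem minimalPeriod_eq_of_not_isPeriodicPt_div_prime (hx : IsPeriodicPt g m x)
    (hprime : ∀ p : ℕ, p.Prime → p ∣ m → ¬ IsPeriodicPt g (m / p) x) :
    minimalPeriod g x = m := by
  obtain ⟨a, ha⟩ := hx.minimalPeriod_dvd
  suffices a = 1 by rw [ha, this, mul_one]
  by_contra ha1
  have hdvd : a.minFac ∣ m := a.minFac_dvd.trans (Dvd.intro_left _ ha.symm)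
  refine hprime _ (Nat.minFac_prime ha1) hdvd ?_
  rw [isPeriodicPt_iff_minimalPeriod_dvd, Nat.dvd_div_iff_mul_dvd hdvd, ha, mul_comm]
  exact Nat.mul_dvd_mul_left _ a.minFac_dvd

theorem isPeriodicPt_of_mul_of_coprime {c d p : ℕ} (hcp : c.Coprime p)
    (hp : IsPeriodicPt g (d * p) x) (hc : IsPeriodicPt g (d * c) x) : IsPeriodicPt g d x := by
  simpa only [Nat.gcd_mul_left, hcp.gcd_eq_one, mul_one] using hc.gcd hp

theorem exactPeriodicPt_minimalPeriod {n : ℕ} {g : Cn n → Cn n} {x : Cn n} :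
    ExactPeriodicPt g (minimalPeriod g x) x :=
  ⟨isPeriodicPt_minimalPeriod g x, fun _ hj hlt =>
    not_isPeriodicPt_of_pos_of_lt_minimalPeriod hj.ne' hlt⟩

variable {K V : Type*} [Field K] [AddCommGroup V] [Module K V] {A : Module.End K V}

theorem exists_prime_forall_isPeriodicPt_div [Infinite K] (hm : 0 < m)
    (hA : ∀ x, minimalPeriod A x ≠ m) :
    ∃ p : ℕ, p.Prime ∧ p ∣ m ∧ ∀ x, IsPeriodicPt A m x → IsPeriodicPt A (m / p) x := by
  let W (k : ℕ) : Submodule K V := LinearMap.eqLocus (A ^ k) 1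
  have mem_W (k : ℕ) (x : V) : x ∈ W k ↔ IsPeriodicPt A k x := by
    rw [LinearMap.mem_eqLocus, Module.End.pow_apply, Module.End.one_apply]
    rfl
  have hcover : ⋃ p : m.primeFactors, ((W (m / p)).comap (W m).subtype : Set (W m)) = univ := by
    refine eq_univ_of_forall fun x => ?_
    by_contra hx
    simp only [mem_iUnion, SetLike.mem_coe, Submodule.mem_comap, Submodule.subtype_apply, mem_W,
      not_exists] at hx
    exact hA x <| minimalPeriod_eq_of_not_isPeriodicPt_div_prime ((mem_W m x).1 x.2)
      fun p hp hpm => hx ⟨p, Nat.mem_primeFactors.2 ⟨hp, hpm, hm.ne'⟩⟩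
  obtain ⟨p, hp⟩ := Subspace.exists_eq_top_of_iUnion_eq_univ hcover
  refine ⟨p, Nat.prime_of_mem_primeFactors p.2, Nat.dvd_of_mem_primeFactors p.2, fun x hx => ?_⟩
  exact (mem_W _ _).1 (Submodule.comap_subtype_eq_top.1 hp ((mem_W m x).2 hx))

theorem injective_geom_sum_of_isPeriodicPt {p : ℕ} (hp : (p : K) ≠ 0)
    (hA : ∀ x, IsPeriodicPt A p x → A x = x) :
    Injective (∑ j ∈ Finset.range p, A ^ j : Module.End K V) := by
  refine (injective_iff_map_eq_zero _).2 fun x hx => ?_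
  have hperiod : (A ^ p) x = x := by
    have hgeom := congr($(mul_geom_sum A p) x)
    rwa [Module.End.mul_apply, hx, map_zero, LinearMap.sub_apply, Module.End.one_apply, eq_comm,
      sub_eq_zero] at hgeom
  have hfix : A x = x := hA x (by rwa [Module.End.pow_apply] at hperiod)
  have hsum : (p : K) • x = 0 := by
    simpa [Module.End.pow_apply, iterate_fixed hfix, Nat.cast_smul_eq_nsmul] using hx
  exact (smul_eq_zero.1 hsum).resolve_left hp

end Periods

section Iteration

open Function

variable {𝕜 E : Type*} [NontriviallyNormedField 𝕜] [NormedAddCommGroup E] [NormedSpace 𝕜 E]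

theorem sub_iterate_sub_geom_sum_isLittleO {g : E → E} {A : E →L[𝕜] E} {z : E}
    (hg : HasStrictFDerivAt g A z) (hz : g z = z) (p : ℕ) :
    (fun x => x - g^[p] x - (∑ j ∈ Finset.range p, A ^ j) (x - g x)) =o[𝓝 z]
      fun x => x - g x := by
  have htelescope (x : E) : x - g^[p] x - (∑ j ∈ Finset.range p, A ^ j) (x - g x) =
      ∑ j ∈ Finset.range p, (g^[j] x - g^[j] (g x) - (A ^ j) (x - g x)) := by
    rw [Finset.sum_sub_distrib, sum_apply]
    simpa only [iterate_succ_apply, iterate_zero_apply] using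
      congrArg (· - _) (Finset.sum_range_sub' (fun j => g^[j] x) p).symm
  have hpair : Tendsto (fun x => (x, g x)) (𝓝 z) (𝓝 (z, z)) := by
    simpa only [id, hz] using (continuousAt_id.prodMk hg.continuousAt).tendsto
  simp only [htelescope]
  exact IsLittleO.fun_sum fun j _ => (hg.iterate hz j).isLittleO.comp_tendsto hpair

theorem analyticAt_iterate {g : E → E} {z : E} (hg : AnalyticAt 𝕜 g z) (hz : g z = z) (j : ℕ) :
    AnalyticAt 𝕜 g^[j] z := by
  induction j with
  | zero => exact analyticAt_id
  | succ j ih => exact ih.comp_of_eq hg hz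

variable {n : ℕ} {z : Cn n}

theorem fixedPointIndex_iterate {g : Cn n → Cn n} (hg : AnalyticAt ℂ g z) (hz : g z = z) {p : ℕ}
    (hp : p ≠ 0) (hfix : ∀ x, IsPeriodicPt (fderiv ℂ g z) p x → fderiv ℂ g z x = x) :
    fixedPointIndex g^[p] z = fixedPointIndex g z := by
  let A : Module.End ℂ (Cn n) := (fderiv ℂ g z).toLinearMap
  let L : Cn n ≃L[ℂ] Cn n := (LinearEquiv.ofInjectiveEndo (∑ j ∈ Finset.range p, A ^ j)
    (injective_geom_sum_of_isPeriodicPt (Nat.cast_ne_zero.2 hp) hfix)).toContinuousLinearEquiv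
  have hL (x : Cn n) : L x = (∑ j ∈ Finset.range p, fderiv ℂ g z ^ j) x := by
    simp [L, A, Module.End.pow_apply]
  refine zeroOrder_eq_of_sub_isLittleO L (analyticAt_id.sub hg)
    (analyticAt_id.sub (analyticAt_iterate hg hz p)) ?_
  simp only [hL]
  exact sub_iterate_sub_geom_sum_isLittleO hg.hasStrictFDerivAt hz p

theorem fixedPointIndex_iterate_mul {f : Cn n → Cn n} (hf : AnalyticAt ℂ f z) (hz : f z = z)
    {d p : ℕ} (hp : p ≠ 0)
    (hperiod : ∀ x, IsPeriodicPt (fderiv ℂ f z) (d * p) x → IsPeriodicPt (fderiv ℂ f z) d x) :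
    fixedPointIndex f^[d * p] z = fixedPointIndex f^[d] z := by
  have hderiv : ⇑(fderiv ℂ f^[d] z) = (fderiv ℂ f z)^[d] := by
    rw [(hf.hasStrictFDerivAt.iterate hz d).hasFDerivAt.fderiv, FunLike.coe_pow_eq_iterate]
  rw [iterate_mul]
  refine fixedPointIndex_iterate (analyticAt_iterate hf hz d) (iterate_fixed hz d) hp fun x hx => ?_
  rw [hderiv] at hx ⊢
  exact hperiod x (by rwa [IsPeriodicPt, iterate_mul])

end Iteration

section DoldSums

theorem sum_powerset_primeFactors_eq_zero {R : Type*} [Ring R] {a : ℕ → R} {m p : ℕ} (hm : m ≠ 0)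
    (hp : p.Prime) (hpm : p ∣ m)
    (ha : ∀ c d, c.Coprime p → m = d * p * c → a (d * p) = a d) :
    ∑ τ ∈ m.primeFactors.powerset, (-1) ^ τ.card * a (m / ∏ q ∈ τ, q) = 0 := by
  rw [← Finset.insert_erase (Nat.mem_primeFactors.2 ⟨hp, hpm, hm⟩),
    Finset.sum_powerset_insert (Finset.notMem_erase _ _), ← Finset.sum_add_distrib]
  refine Finset.sum_eq_zero fun τ hτ => ?_
  have hτm := Finset.mem_powerset.1 hτ
  have hpτ : p ∉ τ := fun h => Finset.notMem_erase _ _ (hτm h)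
  rw [Finset.card_insert_of_notMem hpτ, Finset.prod_insert hpτ]
  set c := ∏ q ∈ τ, q
  have hcp : c.Coprime p := Nat.Coprime.prod_left fun q hq =>
    (Nat.coprime_primes (Nat.prime_of_mem_primeFactors (Finset.mem_of_mem_erase (hτm hq))) hp).2
      (Finset.ne_of_mem_erase (hτm hq))
  have hcm : c ∣ m := (Finset.prod_dvd_prod_of_subset _ _ _
    (hτm.trans (Finset.erase_subset _ _))).trans (Nat.prod_primeFactors_dvd m)
  obtain ⟨d, rfl⟩ := hcp.symm.mul_dvd_of_dvd_of_dvd hpm hcm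
  have hpc : 0 < p * c := Nat.pos_of_ne_zero (left_ne_zero_of_mul hm)
  have hc : 0 < c := Nat.pos_of_mul_pos_left hpc
  rw [Nat.mul_div_cancel_left d hpc, show p * c * d = d * p * c by ring,
    Nat.mul_div_cancel _ hc, ha c d hcp (by ring), pow_succ]
  noncomm_ring

theorem sum_powerset_primeFactors_eq_sum_divisorsAntidiagonal {R : Type*} [Ring R] (a : ℕ → R)
    {m : ℕ} (hm : m ≠ 0) :
    ∑ τ ∈ m.primeFactors.powerset, (-1) ^ τ.card * a (m / ∏ q ∈ τ, q) =
      ∑ x ∈ m.divisorsAntidiagonal, (ArithmeticFunction.moebius x.1 : R) * a x.2 := by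
  have hmoebius : ∀ τ ∈ m.primeFactors.powerset,
      ArithmeticFunction.moebius (∏ q ∈ τ, q) = (-1) ^ τ.card := fun τ hτ => by
    have hτm := Finset.mem_powerset.1 hτ
    rw [ArithmeticFunction.isMultiplicative_moebius.map_prod_of_subset_primeFactors m τ hτm]
    exact Finset.prod_eq_pow_card fun q hq =>
      ArithmeticFunction.moebius_apply_prime (Nat.prime_of_mem_primeFactors (hτm hq))
  have hfactors : (UniqueFactorizationMonoid.normalizedFactors m).toFinset = m.primeFactors := by
    ext q
    simp [Nat.factors_eq]
  rw [Nat.sum_divisorsAntidiagonal (fun d e => (ArithmeticFunction.moebius d : R) * a e),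
    ← Finset.sum_filter_of_ne (s := m.divisors) (p := Squarefree) fun d _ hd =>
      ArithmeticFunction.moebius_ne_zero_iff_squarefree.1 fun h => hd (by simp [h]),
    Nat.sum_divisors_filter_squarefree hm, hfactors]
  refine Finset.sum_congr rfl fun τ hτ => ?_
  rw [Finset.prod_val, Function.id_def, hmoebius τ hτ, Int.cast_pow, Int.cast_neg, Int.cast_one]

theorem sum_divisors_sum_powerset_primeFactors {R : Type*} [Ring R] (a : ℕ → R) {M : ℕ}
    (hM : 0 < M) :
    ∑ m ∈ M.divisors, ∑ τ ∈ m.primeFactors.powerset, (-1) ^ τ.card * a (m / ∏ q ∈ τ, q) = a M :=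
  ArithmeticFunction.sum_eq_iff_sum_mul_moebius_eq.2 (fun _ hm =>
    (sum_powerset_primeFactors_eq_sum_divisorsAntidiagonal a hm.ne').symm) M hM

end DoldSums

section DoldIndex

open Function

variable {n : ℕ} {f : Cn n → Cn n}

theorem doldIndex_eq_zero (hf : IsGerm f) {m : ℕ} (hm : 0 < m)
    (hno : ¬ ∃ x, ExactPeriodicPt (fun y => fderiv ℂ f 0 y) m x) : doldIndex f m = 0 := by
  obtain ⟨p, hp, hpm, hperiod⟩ := exists_prime_forall_isPeriodicPt_div
    (A := (fderiv ℂ f 0).toLinearMap) hm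
    fun x hx => hno ⟨x, hx ▸ exactPeriodicPt_minimalPeriod⟩
  refine sum_powerset_primeFactors_eq_zero (a := fun k => (fixedPointIndex f^[k] 0 : ℤ)) hm.ne' hp
    hpm fun c d hcp hmd => congrArg Nat.cast ?_
  refine fixedPointIndex_iterate_mul hf.1 hf.2 hp.ne_zero fun x hx =>
    isPeriodicPt_of_mul_of_coprime hcp hx ?_
  have hdiv : m / p = d * c := Nat.div_eq_of_eq_mul_left hp.pos (by rw [hmd]; ring)
  exact hdiv ▸ hperiod x (hmd ▸ hx.mul_const c)

theorem sum_divisors_doldIndex (f : Cn n → Cn n) {M : ℕ} (hM : 0 < M) :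
    ∑ m ∈ M.divisors, doldIndex f m = (fixedPointIndex f^[M] 0 : ℤ) :=
  sum_divisors_sum_powerset_primeFactors (fun k => (fixedPointIndex f^[k] 0 : ℤ)) hM

end DoldIndex

theorem doldIndex_vanishing_and_sum_general (f : Cn n → Cn n) (hf : IsGerm f) :
    (∀ m : ℕ, 0 < m →
        ¬(∃ x : Cn n, ExactPeriodicPt (fun y => fderiv ℂ f 0 y) m x) →
        IsolatedFixedPtAt0 (f^[m]) → doldIndex f m = 0) ∧
    (∀ M : ℕ, 0 < M → IsolatedFixedPtAt0 (f^[M]) →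
      (fixedPointIndex (f^[M]) 0 : ℤ) =
        ∑ m ∈ M.divisors.filter
            (fun m => ∃ x : Cn n, ExactPeriodicPt (fun y => fderiv ℂ f 0 y) m x),
          doldIndex f m) := by
  refine ⟨fun m hm hno _ => doldIndex_eq_zero hf hm hno, fun M hM _ => ?_⟩
  rw [← sum_divisors_doldIndex f hM]
  refine (Finset.sum_filter_of_ne fun m hm hne => ?_).symm
  exact by_contra fun hno => hne (doldIndex_eq_zero hf (Nat.pos_of_mem_divisors hm) hno)

/-- (i) If the linear part of `f` at `0` has no periodic point of exact period `m` and
`0` is an isolated fixed point of `f^m`, then `P_m(f,0) = 0`. (ii) If `0` is an isolated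
fixed point of `f^M`, then `μ_{f^M}(0)` is the sum of `P_m(f,0)` over the divisors `m`
of `M` for which the linear part of `f` at `0` has a periodic point of exact period `m`. -/
theorem doldIndex_vanishing_and_sum (f : Cn 2 → Cn 2) (hf : IsGerm f) :
    (∀ m : ℕ, 0 < m →
        ¬(∃ x : Cn 2, ExactPeriodicPt (fun y => fderiv ℂ f 0 y) m x) →
        IsolatedFixedPtAt0 (f^[m]) → doldIndex f m = 0) ∧
    (∀ M : ℕ, 0 < M → IsolatedFixedPtAt0 (f^[M]) →
      (fixedPointIndex (f^[M]) 0 : ℤ) =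
        ∑ m ∈ M.divisors.filter
            (fun m => ∃ x : Cn 2, ExactPeriodicPt (fun y => fderiv ℂ f 0 y) m x),
          doldIndex f m) :=
  doldIndex_vanishing_and_sum_general f hf

end ZhangPaper
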